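/- arXiv:1903.08625 — 2 statements merged into one kernel-verified Lean document; each statement's English description precedes it below -/
import Mathlib

section
/- Let α, β, γ be left-c.e. real numbers. If α ≤_qS γ and β ≤_qS γ, then α + β ≤_qS γ. -/
open Filter Topology

/-- `a` is a computable nondecreasing sequence of rationals converging to the real `x`. -/
def CompApproxSeq (x : ℝ) (a : ℕ → ℚ) : Prop :=
  Computable a ∧ Monotone a ∧ Filter.Tendsto (fun n => (a n : ℝ)) Filter.atTop (nhds x)

/-- A real number is left-c.e. if it has a computable nondecreasing sequence of
rationals converging to it (equivalently, its left cut is c.e.). -/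
def LeftCE (x : ℝ) : Prop := ∃ a : ℕ → ℚ, CompApproxSeq x a

/-- Solovay reducibility: there are a partial computable `f : ℚ →. ℚ` and a positive
integer `d` such that for every rational `q < β`, `f q` is defined, `f q < α`, and
`α - f q < d * (β - q)`. -/
def SRed (α β : ℝ) : Prop :=
  ∃ f : ℚ →. ℚ, Partrec f ∧ ∃ d : ℕ, 0 < d ∧
    ∀ q : ℚ, (q : ℝ) < β → ∃ y ∈ f q, (y : ℝ) < α ∧ α - (y : ℝ) < (d : ℝ) * (β - (q : ℝ))

/-- Quasi Solovay reducibility: there are a partial computable `f : ℚ →. ℚ` and positive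
integers `d, l` such that for every rational `q < β`, `f q` is defined, `f q < α`, and
`(α - f q) ^ l < d * (β - q)`. -/
def QSRed (α β : ℝ) : Prop :=
  ∃ f : ℚ →. ℚ, Partrec f ∧ ∃ d l : ℕ, 0 < d ∧ 0 < l ∧
    ∀ q : ℚ, (q : ℝ) < β → ∃ y ∈ f q, (y : ℝ) < α ∧
      (α - (y : ℝ)) ^ l < (d : ℝ) * (β - (q : ℝ))

open Encodable

/-- The raw encoding of rationals. -/
abbrev rawE (q : ℚ) : ℕ := @Encodable.encode ℚ Rat.instEncodable q

theorem rawE_eq (q : ℚ) : rawE q = Nat.pair (Encodable.encode q.num) q.den := by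
  rfl

theorem raw_inf : Infinite (Set.range rawE) :=
  Infinite.of_injective _
    (Equiv.ofInjective _ (@encode_injective ℚ Rat.instEncodable)).injective

/-- The `n`-th element of the range of the raw encoding. -/
noncomputable def nthRaw (n : ℕ) : Set.range rawE :=
  @Nat.Subtype.ofNat (Set.range rawE) (@decidableRangeEncode ℚ Rat.instEncodable) raw_inf n

theorem raw_ofNat (n : ℕ) : rawE (Denumerable.ofNat ℚ n) = (nthRaw n : ℕ) := by
  have h : Denumerable.ofNat ℚ n =
    (@Encodable.equivRangeEncode ℚ Rat.instEncodable).symm (nthRaw n) := rfl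
  rw [h]
  exact congrArg Subtype.val
    ((@Encodable.equivRangeEncode ℚ Rat.instEncodable).apply_symm_apply _)

/-- positive part of a coded integer -/
def zp (m : ℕ) : ℕ := if m % 2 = 0 then m / 2 else 0
/-- negative part of a coded integer -/
def zn (m : ℕ) : ℕ := if m % 2 = 0 then 0 else m / 2 + 1

theorem zp_zn (z : ℤ) : z = (zp (encode z) : ℤ) - zn (encode z) := by
  cases z with
  | ofNat n =>
    have : encode (Int.ofNat n) = 2 * n := rfl
    rw [this]; simp [zp, zn]
  | negSucc n =>
    have : encode (Int.negSucc n) = 2 * n + 1 := rfl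
    rw [this]
    have h1 : (2 * n + 1) % 2 = 1 := by omega
    have h2 : (2 * n + 1) / 2 = n := by omega
    simp [zp, zn, h1, h2]; omega

theorem natAbs_zp_zn (z : ℤ) : z.natAbs = zp (encode z) + zn (encode z) := by
  have h := zp_zn z
  have : zp (encode z) = 0 ∨ zn (encode z) = 0 := by
    unfold zp zn; split_ifs <;> simp
  omega

theorem prim_mod2 : PrimrecPred fun m : ℕ => m % 2 = 0 :=
  Primrec.eq.comp (Primrec.nat_mod.comp Primrec.id (Primrec.const 2)) (Primrec.const 0)

theorem prim_zp : Primrec zp :=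
  Primrec.ite prim_mod2 (Primrec.nat_div.comp Primrec.id (Primrec.const 2)) (Primrec.const 0)

theorem prim_zn : Primrec zn :=
  Primrec.ite prim_mod2 (Primrec.const 0)
    (Primrec.succ.comp (Primrec.nat_div.comp Primrec.id (Primrec.const 2)))

theorem encInt_surj (m : ℕ) : ∃ z : ℤ, encode z = m :=
  ⟨Denumerable.ofNat ℤ m, Denumerable.encode_ofNat m⟩

theorem coprime_iff (a d : ℕ) (hd : 0 < d) :
    a.Coprime d ↔ ∀ k < d + 1, (¬ (a % k = 0 ∧ d % k = 0) ∨ k = 1) := by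
  constructor
  · intro h k _
    by_cases hk : a % k = 0 ∧ d % k = 0
    · right
      exact Nat.eq_one_of_dvd_coprimes h (Nat.dvd_of_mod_eq_zero hk.1)
        (Nat.dvd_of_mod_eq_zero hk.2)
    · exact Or.inl hk
  · intro h
    have hg := Nat.le_of_dvd hd (Nat.gcd_dvd_right a d)
    rcases h (a.gcd d) (by omega) with h | h
    · exact absurd ⟨Nat.mod_eq_zero_of_dvd (Nat.gcd_dvd_left a d),
        Nat.mod_eq_zero_of_dvd (Nat.gcd_dvd_right a d)⟩ h
    · exact h

theorem mem_range_iff (y : ℕ) : y ∈ Set.range rawE ↔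
    (0 < y.unpair.2 ∧ ∀ k < y.unpair.2 + 1,
      (¬ ((zp y.unpair.1 + zn y.unpair.1) % k = 0 ∧ y.unpair.2 % k = 0) ∨ k = 1)) := by
  constructor
  · rintro ⟨q, rfl⟩
    rw [rawE_eq]
    simp only [Nat.unpair_pair]
    refine ⟨q.den_pos, ?_⟩
    rw [← coprime_iff _ _ q.den_pos, ← natAbs_zp_zn]
    exact q.reduced
  · rintro ⟨h0, h⟩
    rw [← coprime_iff _ _ h0] at h
    obtain ⟨z, hz⟩ := encInt_surj y.unpair.1
    rw [← hz, ← natAbs_zp_zn] at h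
    refine ⟨⟨z, y.unpair.2, h0.ne', h⟩, ?_⟩
    rw [rawE_eq]
    simp only [hz, Nat.pair_unpair]

theorem prim_mem : PrimrecPred fun y : ℕ => y ∈ Set.range rawE := by
  have hden : Primrec fun y : ℕ => y.unpair.2 := Primrec.snd.comp Primrec.unpair
  have hnum : Primrec fun y : ℕ => y.unpair.1 := Primrec.fst.comp Primrec.unpair
  have hR : PrimrecRel fun (k y : ℕ) =>
      (¬ ((zp y.unpair.1 + zn y.unpair.1) % k = 0 ∧ y.unpair.2 % k = 0) ∨ k = 1) := by
    have hn : Primrec fun y : ℕ => zp y.unpair.1 + zn y.unpair.1 :=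
      Primrec.nat_add.comp (prim_zp.comp hnum) (prim_zn.comp hnum)
    have e1 : PrimrecPred fun p : ℕ × ℕ => (zp p.2.unpair.1 + zn p.2.unpair.1) % p.1 = 0 :=
      Primrec.eq.comp (Primrec.nat_mod.comp (hn.comp Primrec.snd) Primrec.fst) (Primrec.const 0)
    have e2 : PrimrecPred fun p : ℕ × ℕ => p.2.unpair.2 % p.1 = 0 :=
      Primrec.eq.comp (Primrec.nat_mod.comp (hden.comp Primrec.snd) Primrec.fst) (Primrec.const 0)
    have e3 : PrimrecPred fun p : ℕ × ℕ => p.1 = 1 :=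
      Primrec.eq.comp Primrec.fst (Primrec.const 1)
    exact (e1.and e2).not.or e3
  have h2 := hR.forall_lt.comp (Primrec.succ.comp hden) Primrec.id
  have h1 : PrimrecPred fun y : ℕ => 0 < y.unpair.2 :=
    Primrec.nat_lt.comp (Primrec.const 0) hden
  exact (h1.and h2).of_eq fun y => (mem_range_iff y).symm

/-- A function whose graph is decidable by a computable function is computable. -/
theorem comp_of_graph {A : Type*} [Primcodable A] (h : A → ℕ) (p : A → ℕ → Bool)
    (hp : Computable₂ p) (H : ∀ a k, p a k = true → (∀ j < k, p a j = false) → k = h a)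
    (H2 : ∀ a, ∃ k, p a k = true) : Computable h := by
  have h1 : Partrec fun a => Nat.rfind (fun k => (p a k : Part Bool)) :=
    Partrec.rfind hp.partrec₂
  refine h1.of_eq fun a => ?_
  have hd : (Nat.rfind (fun k => (p a k : Part Bool))).Dom := by
    obtain ⟨k, hk⟩ := H2 a
    exact Nat.rfind_dom.2 ⟨k, by simp [hk], fun _ => trivial⟩
  have hm := Nat.mem_rfind.1 (Part.get_mem hd)
  have := H a _ (Part.mem_some_iff.1 hm.1).symm
    (fun j hj => (Part.mem_some_iff.1 (hm.2 hj)).symm)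
  refine Part.eq_some_iff.2 ?_
  rw [← this]
  exact Part.get_mem hd

open Classical in
/-- next element of the range -/
noncomputable def nextRaw (x : ℕ) : ℕ :=
  if h : ∃ m, x + m + 1 ∈ Set.range rawE then Nat.find h else 0

theorem next_ex (x : ℕ) : ∃ m, x + m + 1 ∈ Set.range rawE := by
  have := raw_inf
  have h2 : (Set.range rawE).Infinite := Set.infinite_coe_iff.1 this
  obtain ⟨y, hy, hxy⟩ := h2.exists_gt x
  exact ⟨y - x - 1, by rwa [show x + (y - x - 1) + 1 = y by omega]⟩

theorem comp_nextRaw : Computable nextRaw := by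
  classical
  have hp : PrimrecPred fun p : ℕ × ℕ => p.1 + p.2 + 1 ∈ Set.range rawE :=
    prim_mem.comp (Primrec.succ.comp (Primrec.nat_add.comp Primrec.fst Primrec.snd))
  have hp' : Primrec fun p : ℕ × ℕ => decide (p.1 + p.2 + 1 ∈ Set.range rawE) := hp.decide
  refine comp_of_graph nextRaw (fun x m => decide (x + m + 1 ∈ Set.range rawE)) hp'.to_comp ?_ ?_
  · intro x k hk hj
    rw [nextRaw, dif_pos (next_ex x)]
    symm
    rw [Nat.find_eq_iff]
    exact ⟨by simpa using hk, fun j hjk => by simpa using hj j hjk⟩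
  · intro x
    obtain ⟨m, hm⟩ := next_ex x
    exact ⟨m, by simpa using hm⟩

theorem nthRaw_succ (n : ℕ) : (nthRaw (n + 1) : ℕ) = nthRaw n + nextRaw (nthRaw n) + 1 := by
  rw [nextRaw, dif_pos (next_ex _)]
  have : (nthRaw (n + 1) : ℕ) = (@Nat.Subtype.succ (Set.range rawE) raw_inf
    (@decidableRangeEncode ℚ Rat.instEncodable) (nthRaw n) : ℕ) := rfl
  rw [this]
  unfold Nat.Subtype.succ
  show _ + _ + 1 = _ + _ + 1
  congr

theorem comp_nthRaw : Computable fun n => (nthRaw n : ℕ) := by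
  have hs : Computable₂ fun (_ : ℕ) (p : ℕ × ℕ) => p.2 + nextRaw p.2 + 1 := by
    have h2 : Computable fun p : ℕ × (ℕ × ℕ) => p.2.2 := Computable.snd.comp Computable.snd
    exact Computable.succ.comp (Primrec.nat_add.to_comp.comp h2 (comp_nextRaw.comp h2))
  have := Computable.nat_rec (f := fun n : ℕ => n) (g := fun _ => (nthRaw 0 : ℕ))
    Computable.id (Computable.const _) hs
  refine this.of_eq fun n => ?_
  induction n with
  | zero => rfl
  | succ n ih => rw [nthRaw_succ, ← ih]

theorem comp_rawE : Computable rawE := by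
  refine (comp_nthRaw.comp Computable.encode).of_eq fun q => ?_
  rw [← raw_ofNat, Denumerable.ofNat_encode]

/-- positive part of the numerator -/
def qp (q : ℚ) : ℕ := zp (rawE q).unpair.1
/-- negative part of the numerator -/
def qn (q : ℚ) : ℕ := zn (rawE q).unpair.1
/-- denominator -/
def qd (q : ℚ) : ℕ := (rawE q).unpair.2

theorem comp_qp : Computable qp :=
  (prim_zp.comp (Primrec.fst.comp Primrec.unpair)).to_comp.comp comp_rawE
theorem comp_qn : Computable qn :=
  (prim_zn.comp (Primrec.fst.comp Primrec.unpair)).to_comp.comp comp_rawE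
theorem comp_qd : Computable qd :=
  (Primrec.snd.comp Primrec.unpair).to_comp.comp comp_rawE

theorem qd_pos (q : ℚ) : (0 : ℚ) < qd q := by
  simp [qd, rawE_eq, q.den_pos]

theorem q_eq (q : ℚ) : q = ((qp q : ℚ) - qn q) / qd q := by
  have h := zp_zn q.num
  have h' : (q.num : ℚ) = (zp (encode q.num) : ℚ) - zn (encode q.num) := by exact_mod_cast h
  simp only [qp, qn, qd, rawE_eq, Nat.unpair_pair]
  rw [← h', Rat.num_div_den]

theorem cadd {A : Type*} [Primcodable A] {f g : A → ℕ} (hf : Computable f) (hg : Computable g) :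
    Computable fun a => f a + g a := Primrec.nat_add.to_comp.comp hf hg
theorem cmul {A : Type*} [Primcodable A] {f g : A → ℕ} (hf : Computable f) (hg : Computable g) :
    Computable fun a => f a * g a := Primrec.nat_mul.to_comp.comp hf hg

theorem add_iff (r s q : ℚ) : q = r + s ↔
    qp q * (qd r * qd s) + qd q * (qn r * qd s + qn s * qd r) =
    qn q * (qd r * qd s) + qd q * (qp r * qd s + qp s * qd r) := by
  have h1 := (qd_pos r).ne'
  have h2 := (qd_pos s).ne'
  have h3 := (qd_pos q).ne'
  conv_lhs => rw [q_eq q, q_eq r, q_eq s]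
  rw [div_add_div _ _ h1 h2, div_eq_div_iff h3 (mul_ne_zero h1 h2)]
  rw [← Nat.cast_inj (R := ℚ)]
  push_cast
  constructor <;> intro h <;> linarith

theorem lt_iff' (r s : ℚ) : r < s ↔
    qp r * qd s + qn s * qd r < qp s * qd r + qn r * qd s := by
  conv_lhs => rw [q_eq r, q_eq s]
  rw [div_lt_div_iff₀ (qd_pos r) (qd_pos s), ← Nat.cast_lt (α := ℚ)]
  push_cast
  constructor <;> intro h <;> linarith

theorem comp_add : Computable₂ fun r s : ℚ => r + s := by
  have key : Computable fun p : ℚ × ℚ => @encode ℚ Primcodable.toEncodable (p.1 + p.2) := by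
    refine comp_of_graph _ (fun p k => decide (
      qp (Denumerable.ofNat ℚ k) * (qd p.1 * qd p.2) +
        qd (Denumerable.ofNat ℚ k) * (qn p.1 * qd p.2 + qn p.2 * qd p.1) =
      qn (Denumerable.ofNat ℚ k) * (qd p.1 * qd p.2) +
        qd (Denumerable.ofNat ℚ k) * (qp p.1 * qd p.2 + qp p.2 * qd p.1))) ?_ ?_ ?_
    · have hr : Computable fun x : (ℚ × ℚ) × ℕ => x.1.1 := Computable.fst.comp Computable.fst
      have hs : Computable fun x : (ℚ × ℚ) × ℕ => x.1.2 := Computable.snd.comp Computable.fst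
      have hq : Computable fun x : (ℚ × ℚ) × ℕ => Denumerable.ofNat ℚ x.2 :=
        (Computable.ofNat ℚ).comp Computable.snd
      have hdd := cmul (comp_qd.comp hr) (comp_qd.comp hs)
      have L := cadd (cmul (comp_qp.comp hq) hdd) (cmul (comp_qd.comp hq)
        (cadd (cmul (comp_qn.comp hr) (comp_qd.comp hs)) (cmul (comp_qn.comp hs) (comp_qd.comp hr))))
      have R := cadd (cmul (comp_qn.comp hq) hdd) (cmul (comp_qd.comp hq)
        (cadd (cmul (comp_qp.comp hr) (comp_qd.comp hs)) (cmul (comp_qp.comp hs) (comp_qd.comp hr))))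
      have E : Computable₂ fun a b : ℕ => decide (a = b) := Primrec.eq.decide.to_comp
      exact E.comp L R
    · intro p k hk _
      rw [decide_eq_true_iff, ← add_iff] at hk
      rw [← hk]; exact (Denumerable.encode_ofNat k).symm
    · intro p
      refine ⟨@encode ℚ Primcodable.toEncodable (p.1 + p.2), ?_⟩
      rw [decide_eq_true_iff, ← add_iff]; exact Denumerable.ofNat_encode _
  exact ((Computable.ofNat ℚ).comp key).of_eq fun p => Denumerable.ofNat_encode _

theorem comp_max (g : ℚ) : Computable fun q : ℚ => max q g := by
  have E : Computable₂ fun a b : ℕ => decide (a < b) := Primrec.nat_lt.decide.to_comp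
  have cg : ∀ n : ℕ, Computable fun _ : ℚ => n := fun n => Computable.const n
  have hc := E.comp (cadd (cmul comp_qp (cg (qd g))) (cmul (cg (qn g)) comp_qd))
    (cadd (cmul (cg (qp g)) comp_qd) (cmul comp_qn (cg (qd g))))
  refine (Computable.cond hc (Computable.const g) Computable.id).of_eq fun q => ?_
  by_cases h : q < g
  · rw [decide_eq_true ((lt_iff' q g).1 h), max_eq_right h.le]; rfl
  · rw [decide_eq_false (fun h' => h ((lt_iff' q g).2 h')), max_eq_left (not_lt.1 h)]; rfl

theorem pow_bound {a x : ℝ} {d l m : ℕ} (ha : 0 < a) (hm : 0 < m) (hx1 : x ≤ 1) (hx : 0 < x)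
    (h : a ^ l < d * x) : a ^ (l * m) < (d : ℝ) ^ m * x := by
  rw [pow_mul]
  have hd : (0 : ℝ) ≤ (d : ℝ) ^ m := by positivity
  calc (a ^ l) ^ m < (d * x) ^ m := pow_lt_pow_left₀ h (by positivity) hm.ne'
    _ = (d : ℝ) ^ m * x ^ m := mul_pow _ _ _
    _ ≤ (d : ℝ) ^ m * x := mul_le_mul_of_nonneg_left (pow_le_of_le_one hx.le hx1 hm.ne') hd

/-- For left-c.e. reals, if `α ≤_qS γ` and `β ≤_qS γ` then `α + β ≤_qS γ`. -/
theorem stmt3 (α β γ : ℝ) (hα : LeftCE α) (hβ : LeftCE β) (hγ : LeftCE γ)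
    (h1 : QSRed α γ) (h2 : QSRed β γ) : QSRed (α + β) γ := by
  obtain ⟨f, hf, d, l, hd, hl, H⟩ := h1
  obtain ⟨f', hf', d', l', hd', hl', H'⟩ := h2
  obtain ⟨g, hg1, hg2⟩ := exists_rat_btwn (show γ - 1 < γ by linarith)
  refine ⟨fun q => (f (max q g)).bind fun y => (f' (max q g)).map fun z => y + z, ?_,
    2 ^ (l * l') * (d ^ l' + d' ^ l), l * l', by positivity, by positivity, ?_⟩
  · have hm := comp_max g
    refine Partrec.bind (hf.comp hm) ?_
    refine Partrec.map (hf'.comp (hm.comp Computable.fst)) ?_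
    exact comp_add.comp (Computable.snd.comp Computable.fst) Computable.snd
  · intro q hq
    have hm : ((max q g : ℚ) : ℝ) < γ := by
      rw [Rat.cast_max]; exact max_lt hq hg2
    have hmq : (q : ℝ) ≤ ((max q g : ℚ) : ℝ) := by exact_mod_cast le_max_left q g
    have hmg : (g : ℝ) ≤ ((max q g : ℚ) : ℝ) := by exact_mod_cast le_max_right q g
    obtain ⟨y, hy, hy1, hy2⟩ := H _ hm
    obtain ⟨z, hz, hz1, hz2⟩ := H' _ hm
    refine ⟨y + z, ?_, ?_, ?_⟩
    · exact Part.mem_bind hy (Part.mem_map _ hz)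
    · push_cast; linarith
    · set x : ℝ := γ - ((max q g : ℚ) : ℝ) with hx
      have hx0 : 0 < x := by linarith
      have hx1 : x ≤ 1 := by linarith
      have ha : 0 < α - y := by linarith
      have hb : 0 < β - z := by linarith
      have A := pow_bound ha hl' hx1 hx0 hy2
      have B := pow_bound hb hl hx1 hx0 hz2
      rw [mul_comm l' l] at B
      have C : (α + β - ((y + z : ℚ) : ℝ)) ^ (l * l') ≤
          2 ^ (l * l') * ((α - y) ^ (l * l') + (β - z) ^ (l * l')) := by
        have e : α + β - ((y + z : ℚ) : ℝ) ≤ 2 * max (α - y) (β - z) := by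
          push_cast
          linarith [le_max_left (α - y) (β - z : ℝ), le_max_right (α - y) (β - z : ℝ)]
        have e0 : 0 ≤ α + β - ((y + z : ℚ) : ℝ) := by push_cast; linarith
        refine (pow_le_pow_left₀ e0 e _).trans ?_
        rw [mul_pow]
        refine mul_le_mul_of_nonneg_left ?_ (by positivity)
        rcases max_cases (α - y : ℝ) (β - z) with ⟨h, _⟩ | ⟨h, _⟩ <;> rw [h]
        · linarith [pow_pos hb (l * l')]
        · linarith [pow_pos ha (l * l')]
      refine C.trans_lt ?_
      have D : (α - y) ^ (l * l') + (β - z) ^ (l * l') < ((d : ℝ) ^ l' + (d' : ℝ) ^ l) * x := by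
        linarith
      have hxq : x ≤ γ - q := by linarith
      push_cast
      rw [mul_assoc]
      refine mul_lt_mul_of_pos_left (D.trans_le ?_) (by positivity)
      exact mul_le_mul_of_nonneg_left hxq (by positivity)
end

section
/- If α ∈ [0,1) is a left-c.e. real number, then h₁(α) is a left-c.e. real number. -/
open Filter Topology

/-- The `n`-th binary digit (after the binary point, counting from `n = 0`) of the
canonical binary expansion of a real in `[0,1)` (the expansion with infinitely many 0s). -/
noncomputable def binDigit (x : ℝ) (n : ℕ) : ℕ := (⌊x * 2 ^ (n + 1)⌋).toNat % 2

/-- `h₁ x` is the real whose binary expansion lists each bit of `x` followed by its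
complement: if `x = Σ aₙ 2^{-(n+1)}` then
`h₁ x = Σ (aₙ 2^{-(2n+1)} + (1 - aₙ) 2^{-(2n+2)})`. -/
noncomputable def h₁ (x : ℝ) : ℝ :=
  ∑' n : ℕ, ((binDigit x n : ℝ) / 2 ^ (2 * n + 1) + (1 - (binDigit x n : ℝ)) / 2 ^ (2 * n + 2))


def e0 (q : ℚ) : ℕ := @Encodable.encode ℚ Rat.instEncodable q
def e1 (q : ℚ) : ℕ := @Encodable.encode ℚ (Primcodable.ofDenumerable ℚ).toEncodable q
theorem e0_eq (q : ℚ) : e0 q = Nat.pair (Encodable.encode q.num) q.den := rfl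

theorem e1_eq (q : ℚ) : e1 q = @List.countP ℕ (fun x => @decide (x ∈ Set.range e0) (@Encodable.decidableRangeEncode ℚ Rat.instEncodable x)) (List.range (e0 q)) := by
  rfl

/-- codes -/
def S0 (n : ℕ) : Prop := 0 < n.unpair.2 ∧ ((n.unpair.1 + 1) / 2).Coprime n.unpair.2

theorem enc_natAbs (z : ℤ) : (Encodable.encode z + 1) / 2 = z.natAbs := by
  rcases z with n | n
  · change (2 * n + 1) / 2 = n; omega
  · change (2 * n + 1 + 1) / 2 = n + 1; omega

def codeNum (i : ℕ) : ℕ := if i % 2 = 0 then i / 2 else 0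

theorem enc_toNat (z : ℤ) : codeNum (Encodable.encode z) = z.toNat := by
  rcases z with n | n
  · change codeNum (2 * n) = n
    simp [codeNum]
  · change codeNum (2 * n + 1) = 0
    have : (2 * n + 1) % 2 ≠ 0 := by omega
    simp [codeNum]

theorem S0_iff (n : ℕ) : S0 n ↔ n ∈ Set.range e0 := by
  constructor
  · rintro ⟨h1, h2⟩
    obtain ⟨z, hz⟩ : ∃ z : ℤ, Encodable.encode z = n.unpair.1 :=
      ⟨Denumerable.ofNat ℤ n.unpair.1, Denumerable.encode_ofNat (α := ℤ) _⟩
    rw [← hz, enc_natAbs] at h2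
    refine ⟨⟨z, n.unpair.2, h1.ne', h2⟩, ?_⟩
    rw [e0_eq]
    simp [hz]
  · rintro ⟨q, rfl⟩
    rw [e0_eq]
    simp only [S0, Nat.unpair_pair, enc_natAbs]
    exact ⟨q.den_pos, q.reduced⟩

theorem S0_prim : PrimrecPred S0 := by
  have hR : PrimrecRel (fun k x : ℕ => k + 2 ∣ (x.unpair.1 + 1) / 2 → ¬ k + 2 ∣ x.unpair.2) := by
    have a1 : Primrec (fun p : ℕ × ℕ => (p.2.unpair.1 + 1) / 2) :=
      Primrec.nat_div.comp (Primrec.succ.comp (Primrec.fst.comp (Primrec.unpair.comp Primrec.snd))) (Primrec.const 2)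
    have a2 : Primrec (fun p : ℕ × ℕ => p.2.unpair.2) :=
      (Primrec.snd.comp (Primrec.unpair.comp Primrec.snd))
    have a3 : Primrec (fun p : ℕ × ℕ => p.1 + 2) := Primrec.nat_add.comp Primrec.fst (Primrec.const 2)
    have b1 : PrimrecPred (fun p : ℕ × ℕ => ((p.2.unpair.1 + 1) / 2) % (p.1 + 2) = 0) :=
      Primrec.eq.comp (Primrec.nat_mod.comp a1 a3) (Primrec.const 0)
    have b2 : PrimrecPred (fun p : ℕ × ℕ => (p.2.unpair.2) % (p.1 + 2) = 0) :=
      Primrec.eq.comp (Primrec.nat_mod.comp a2 a3) (Primrec.const 0)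
    refine PrimrecPred.of_eq (b1.not.or b2.not) ?_
    rintro ⟨k, x⟩
    simp only [Nat.dvd_iff_mod_eq_zero]
    tauto
  have h := hR.forall_lt
  have h2 : PrimrecPred (fun n : ℕ => ∀ k < n.unpair.2, k + 2 ∣ (n.unpair.1 + 1) / 2 → ¬ k + 2 ∣ n.unpair.2) :=
    h.comp (Primrec.snd.comp Primrec.unpair) Primrec.id
  have h3 : PrimrecPred (fun n : ℕ => 0 < n.unpair.2) :=
    Primrec.nat_lt.comp (Primrec.const 0) (Primrec.snd.comp Primrec.unpair)
  refine PrimrecPred.of_eq (h3.and h2) ?_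
  intro n
  refine and_congr_right fun hp => ?_
  constructor
  · intro H
    by_contra hc
    have hg : Nat.gcd ((n.unpair.1 + 1) / 2) n.unpair.2 ≠ 1 := hc
    have hg0 : 0 < Nat.gcd ((n.unpair.1 + 1) / 2) n.unpair.2 := Nat.gcd_pos_of_pos_right _ hp
    obtain ⟨k, hk⟩ : ∃ k, Nat.gcd ((n.unpair.1 + 1) / 2) n.unpair.2 = k + 2 :=
      ⟨Nat.gcd ((n.unpair.1 + 1) / 2) n.unpair.2 - 2, by omega⟩
    have l := Nat.gcd_dvd_left ((n.unpair.1 + 1) / 2) n.unpair.2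
    have r := Nat.gcd_dvd_right ((n.unpair.1 + 1) / 2) n.unpair.2
    rw [hk] at l r
    exact H k (by have := Nat.le_of_dvd hp r; omega) l r
  · intro H k _ hl hr
    have := Nat.dvd_gcd hl hr
    rw [Nat.Coprime.gcd_eq_one H] at this
    have := Nat.le_of_dvd one_pos this
    omega

open Classical in
theorem e1_count (q : ℚ) : e1 q = Nat.count S0 (e0 q) := by
  rw [e1_eq, Nat.count]
  congr 1
  funext x
  exact decide_eq_decide.2 (S0_iff x).symm

open Classical in
theorem count_prim : Primrec (Nat.count S0) := by
  have : Primrec (fun n => Nat.rec (motive := fun _ => ℕ) 0 (fun n IH => IH + if S0 n then 1 else 0) n) := by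
    refine Primrec.nat_rec₁ 0 ?_
    exact Primrec.nat_add.comp Primrec.snd (Primrec.ite (S0_prim.comp Primrec.fst) (Primrec.const 1) (Primrec.const 0))
  refine this.of_eq fun n => ?_
  induction n with
  | zero => simp
  | succ n ih => rw [Nat.count_succ, ← ih]

open Classical in
theorem e0_comp : Computable e0 := by
  have hP : ComputablePred (fun p : ℚ × ℕ => S0 p.2 ∧ Nat.count S0 p.2 = e1 p.1) := by
    have h1 : PrimrecPred (fun p : ℚ × ℕ => S0 p.2 ∧ Nat.count S0 p.2 = e1 p.1) := by
      refine PrimrecPred.and (S0_prim.comp Primrec.snd) ?_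
      exact Primrec.eq.comp (count_prim.comp Primrec.snd) (Primrec.encode.comp Primrec.fst)
    exact ⟨inferInstance, h1.decide.to_comp⟩
  have hex : ∀ q : ℚ, ∃ n, S0 n ∧ Nat.count S0 n = e1 q := fun q =>
    ⟨e0 q, (S0_iff _).2 ⟨q, rfl⟩, (e1_count q).symm⟩
  refine (Computable.find (P := fun q n => S0 n ∧ Nat.count S0 n = e1 q) hP hex).of_eq ?_
  intro q
  have := Nat.find_spec (hex q)
  refine Nat.count_injective this.1 ((S0_iff _).2 ⟨q, rfl⟩) ?_
  rw [← e1_count]; exact this.2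

theorem num_comp : Computable (fun q : ℚ => q.num.toNat) := by
  have : Primrec codeNum := Primrec.ite (Primrec.eq.comp (Primrec.nat_mod.comp Primrec.id (Primrec.const 2)) (Primrec.const 0)) (Primrec.nat_div.comp Primrec.id (Primrec.const 2)) (Primrec.const 0)
  refine ((this.comp (Primrec.fst.comp Primrec.unpair)).to_comp.comp e0_comp).of_eq fun q => ?_
  simp [e0_eq, enc_toNat]

theorem den_comp : Computable (fun q : ℚ => q.den) := by
  refine ((Primrec.snd.comp Primrec.unpair).to_comp.comp e0_comp).of_eq fun q => ?_
  simp [e0_eq]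

theorem frac_unique (q : ℚ) (a b : ℕ) (h1 : (e0 q).unpair.1 = 2 * q.num.toNat)
    (h2 : q.num.toNat * (b + 1) = a * q.den) : q = (a : ℚ) / ((b + 1 : ℕ) : ℚ) := by
  have hz : ((q.num.toNat : ℤ)) = q.num := by
    rw [e0_eq, Nat.unpair_pair] at h1
    simp only at h1
    generalize q.num = z at h1
    rcases z with n | n
    · rfl
    · exfalso
      change 2 * n + 1 = 2 * 0 at h1
      omega
  have hd : (q.den : ℚ) ≠ 0 := by exact_mod_cast q.den_nz
  have hb : ((b + 1 : ℕ) : ℚ) ≠ 0 := by positivity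
  have hq : q = (q.num.toNat : ℚ) / q.den := by
    have hz' : (q.num.toNat : ℚ) = (q.num : ℚ) := by rw [← Int.cast_natCast, hz]
    rw [hz', Rat.num_div_den]
  rw [hq, div_eq_div_iff hd hb]
  exact_mod_cast h2

theorem frac_exists (a b : ℕ) : ∃ q : ℚ, (e0 q).unpair.1 = 2 * q.num.toNat ∧
    q.num.toNat * (b + 1) = a * q.den := by
  refine ⟨(a : ℚ) / ((b + 1 : ℕ) : ℚ), ?_⟩
  set q : ℚ := (a : ℚ) / ((b + 1 : ℕ) : ℚ) with hq
  have h0 : 0 ≤ q := by positivity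
  have hn : 0 ≤ q.num := Rat.num_nonneg.2 h0
  obtain ⟨m, hm⟩ := Int.eq_ofNat_of_zero_le hn
  constructor
  · rw [e0_eq, Nat.unpair_pair, hm]
    rfl
  · have hd : (q.den : ℚ) ≠ 0 := by exact_mod_cast q.den_nz
    have hb : ((b + 1 : ℕ) : ℚ) ≠ 0 := by positivity
    have h3 : (q.num : ℚ) / q.den = (a : ℚ) / ((b + 1 : ℕ) : ℚ) := by rw [Rat.num_div_den]
    rw [div_eq_div_iff hd hb, hm] at h3
    rw [hm]
    simp only [Int.toNat_natCast]
    exact_mod_cast h3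

theorem compEq {α : Type*} [Primcodable α] {f g : α → ℕ} (hf : Computable f) (hg : Computable g) :
    Computable (fun x => decide (f x = g x)) :=
  (Primrec.eq (α := ℕ)).decide.to_comp.comp hf hg

theorem frac_comp : Computable (fun p : ℕ × ℕ => ((p.1 : ℚ) / ((p.2 + 1 : ℕ) : ℚ))) := by
  let P : (ℕ × ℕ) → ℕ → Prop := fun p n =>
    (e0 (Denumerable.ofNat ℚ n)).unpair.1 = 2 * (Denumerable.ofNat ℚ n).num.toNat ∧
    (Denumerable.ofNat ℚ n).num.toNat * (p.2 + 1) = p.1 * (Denumerable.ofNat ℚ n).den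
  have : DecidableRel P := fun p n => by unfold P; infer_instance
  have hof : Computable (fun x : (ℕ × ℕ) × ℕ => Denumerable.ofNat ℚ x.2) :=
    (Computable.ofNat ℚ).comp Computable.snd
  have hnum := num_comp.comp hof
  have hden := den_comp.comp hof
  have he0 := Computable.fst.comp (Computable.unpair.comp (e0_comp.comp hof))
  have hmul : Computable₂ (fun a b : ℕ => a * b) := Primrec.nat_mul.to_comp
  have hP : ComputablePred (fun x : (ℕ × ℕ) × ℕ => P x.1 x.2) := by
    have h1 := compEq he0 (hmul.comp (Computable.const 2) hnum)
    have h2 := compEq (hmul.comp hnum (Computable.succ.comp (Computable.snd.comp Computable.fst)))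
      (hmul.comp (Computable.fst.comp Computable.fst) hden)
    refine ⟨inferInstance, (Primrec.and.to_comp.comp h1 h2).of_eq ?_⟩
    rintro ⟨⟨a, b⟩, n⟩
    simp [P]
  have hex : ∀ p, ∃ n, P p n := by
    rintro ⟨a, b⟩
    obtain ⟨q, h⟩ := frac_exists a b
    refine ⟨@Encodable.encode ℚ (Rat.instDenumerable).toEncodable q, ?_⟩
    simpa only [P, Denumerable.ofNat_encode] using h
  refine ((Computable.ofNat ℚ).comp (Computable.find hP hex)).of_eq ?_
  rintro ⟨a, b⟩
  have := Nat.find_spec (hex (a, b))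
  exact frac_unique _ a b this.1 this.2

theorem binDigit_eq (x : ℝ) (n : ℕ) : binDigit x n = ⌊x * 2 ^ (n + 1)⌋₊ % 2 := by
  rw [binDigit, Int.floor_toNat]

theorem floor_half (x : ℝ) (n : ℕ) : ⌊x * 2 ^ (n + 1)⌋₊ / 2 = ⌊x * 2 ^ n⌋₊ := by
  rw [← Nat.floor_div_ofNat]
  congr 1
  rw [pow_succ]
  simp [← mul_assoc]

/-- Horner evaluation in base 4 of the first `n` binary digits of `x`. -/
noncomputable def H (x : ℝ) : ℕ → ℕ
  | 0 => 0
  | n + 1 => 4 * H x n + binDigit x n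

theorem H_cmp (x y : ℝ) (hx : x < 1) (hy : y < 1) (n : ℕ) :
    (⌊x * 2 ^ n⌋₊ < ⌊y * 2 ^ n⌋₊ → H x n < H y n) ∧
    (⌊x * 2 ^ n⌋₊ = ⌊y * 2 ^ n⌋₊ → H x n = H y n) := by
  induction n with
  | zero =>
    have h1 : ⌊x⌋₊ = 0 := Nat.floor_eq_zero.2 hx
    have h2 : ⌊y⌋₊ = 0 := Nat.floor_eq_zero.2 hy
    simp [h1, h2, H]
  | succ n ih =>
    rw [← floor_half x, ← floor_half y] at ih
    simp only [H, binDigit_eq]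
    generalize ⌊x * 2 ^ (n + 1)⌋₊ = u at *
    generalize ⌊y * 2 ^ (n + 1)⌋₊ = v at *
    generalize H x n = a at *
    generalize H y n = b at *
    constructor
    · intro h
      rcases Nat.lt_or_ge (u / 2) (v / 2) with h3 | h3
      · have := ih.1 h3; omega
      · have := ih.2 (by omega); omega
    · rintro rfl
      have := ih.2 rfl
      omega

theorem H_mono (x y : ℝ) (hxy : x ≤ y) (hy : y < 1) (n : ℕ) : H x n ≤ H y n := by
  have h : ⌊x * 2 ^ n⌋₊ ≤ ⌊y * 2 ^ n⌋₊ := Nat.floor_mono (by gcongr)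
  have := H_cmp x y (hxy.trans_lt hy) hy n
  rcases h.lt_or_eq with h | h
  · exact (this.1 h).le
  · exact (this.2 h).le

theorem H_sum (x : ℝ) (n : ℕ) :
    ∑ i ∈ Finset.range n, (binDigit x i : ℝ) / 4 ^ (i + 1) = (H x n : ℝ) / 4 ^ n := by
  induction n with
  | zero => simp [H]
  | succ n ih =>
    rw [Finset.sum_range_succ, ih, H]
    push_cast
    field_simp
    ring

theorem H_mono_n (x : ℝ) : Monotone (fun n => (H x n : ℝ) / 4 ^ n) := by
  refine monotone_nat_of_le_succ fun n => ?_
  simp only [← H_sum]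
  rw [Finset.sum_range_succ]
  have : (0 : ℝ) ≤ (binDigit x n : ℝ) / 4 ^ (n + 1) := by positivity
  linarith

theorem geo_sum : HasSum (fun n : ℕ => (1 : ℝ) / 4 ^ (n + 1)) (1 / 3) := by
  have := (hasSum_geometric_of_lt_one (r := (1 / 4 : ℝ)) (by norm_num) (by norm_num)).mul_left (1 / 4)
  have e : (1 / 4 : ℝ) * (1 - 1 / 4)⁻¹ = 1 / 3 := by norm_num
  rw [e] at this
  refine this.congr_fun ?_
  intro n
  rw [pow_succ, one_div_pow]
  field_simp

theorem dig_summable (x : ℝ) : Summable (fun n : ℕ => (binDigit x n : ℝ) / 4 ^ (n + 1)) := by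
  refine Summable.of_nonneg_of_le (fun n => by positivity) (fun n => ?_) geo_sum.summable
  have : binDigit x n ≤ 1 := by
    unfold binDigit
    omega
  have : (binDigit x n : ℝ) ≤ 1 := by exact_mod_cast this
  gcongr

theorem h₁_eq (x : ℝ) : h₁ x = 1 / 3 + ∑' n : ℕ, (binDigit x n : ℝ) / 4 ^ (n + 1) := by
  rw [← geo_sum.tsum_eq, ← geo_sum.summable.tsum_add (dig_summable x), h₁]
  congr 1
  funext n
  have e1 : (2 : ℝ) ^ (2 * n + 2) = 4 ^ (n + 1) := by
    rw [show 2 * n + 2 = 2 * (n + 1) by ring, pow_mul]; norm_num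
  have e2 : (2 : ℝ) ^ (2 * n + 1) = 4 ^ (n + 1) / 2 := by
    rw [← e1, pow_succ (n := 2 * n + 1)]; ring
  rw [e1, e2]
  field_simp
  ring

theorem H_tendsto (x : ℝ) :
    Tendsto (fun n => (H x n : ℝ) / 4 ^ n) atTop (𝓝 (h₁ x - 1 / 3)) := by
  have := (dig_summable x).hasSum.tendsto_sum_nat
  simp only [H_sum] at this
  rwa [h₁_eq, add_sub_cancel_left]

theorem H_const_of_dyadic (x : ℝ) (k : ℕ) (hk : (⌊x * 2 ^ k⌋₊ : ℝ) = x * 2 ^ k) (j : ℕ) :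
    (H x (k + j) : ℝ) / 4 ^ (k + j) = (H x k : ℝ) / 4 ^ k := by
  induction j with
  | zero => rfl
  | succ j ih =>
    rw [← ih, ← H_sum, ← H_sum, ← add_assoc, Finset.sum_range_succ]
    have : binDigit x (k + j) = 0 := by
      rw [binDigit_eq]
      have : x * 2 ^ (k + j + 1) = ((⌊x * 2 ^ k⌋₊ * 2 ^ j * 2 : ℕ) : ℝ) := by
        push_cast
        rw [hk]
        ring
      rw [this, Nat.floor_natCast]
      simp
    simp [this]

theorem h₁_of_dyadic (x : ℝ) (k : ℕ) (hk : (⌊x * 2 ^ k⌋₊ : ℝ) = x * 2 ^ k) :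
    h₁ x = 1 / 3 + (H x k : ℝ) / 4 ^ k := by
  have h1 := H_tendsto x
  have h2 : Tendsto (fun n => (H x n : ℝ) / 4 ^ n) atTop (𝓝 ((H x k : ℝ) / 4 ^ k)) := by
    refine tendsto_const_nhds.congr' ?_
    filter_upwards [eventually_ge_atTop k] with n hn
    obtain ⟨j, rfl⟩ := Nat.exists_eq_add_of_le hn
    exact (H_const_of_dyadic x k hk j).symm
  have := tendsto_nhds_unique h1 h2
  linarith

/-- Computable version of `H` on the fraction `a / b`. -/
def HQ (a b : ℕ) (n : ℕ) : ℕ :=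
  Nat.rec (motive := fun _ => ℕ) 0 (fun n IH => 4 * IH + (a * 2 ^ (n + 1) / b) % 2) n

theorem floor_rat (q : ℚ) (n : ℕ) : ⌊(q : ℝ) * 2 ^ n⌋₊ = q.num.toNat * 2 ^ n / q.den := by
  rcases le_or_gt 0 q with h | h
  · obtain ⟨m, hm⟩ := Int.eq_ofNat_of_zero_le (Rat.num_nonneg.2 h)
    have : (q : ℝ) * 2 ^ n = ((m * 2 ^ n : ℕ) : ℝ) / (q.den : ℝ) := by
      rw [Rat.cast_def, hm]
      push_cast
      ring
    rw [this, Nat.floor_div_natCast, Nat.floor_natCast, hm]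
    simp
  · have h1 : q.num.toNat = 0 := Int.toNat_of_nonpos (Rat.num_neg.2 h).le
    rw [h1, Nat.floor_of_nonpos]
    · simp
    · have : (q : ℝ) ≤ 0 := by exact_mod_cast h.le
      exact mul_nonpos_of_nonpos_of_nonneg this (by positivity)

theorem H_eq (q : ℚ) (n : ℕ) : H (q : ℝ) n = HQ q.num.toNat q.den n := by
  induction n with
  | zero => rfl
  | succ n ih =>
    rw [H, ih, binDigit_eq, floor_rat]
    rfl

theorem pow_prim (c : ℕ) : Primrec (fun n : ℕ => c ^ n) := by
  refine (Primrec.nat_rec₁ (f := fun _ IH => IH * c) 1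
    (Primrec.nat_mul.comp Primrec.snd (Primrec.const c))).of_eq fun n => ?_
  induction n with
  | zero => rfl
  | succ n ih => rw [pow_succ, ← ih]

theorem HQ_prim : Primrec₂ (fun (p : ℕ × ℕ) (n : ℕ) => HQ p.1 p.2 n) := by
  refine Primrec.nat_rec (f := fun _ : ℕ × ℕ => 0)
    (g := fun p r => 4 * r.2 + (p.1 * 2 ^ (r.1 + 1) / p.2) % 2) (Primrec.const 0) ?_
  refine Primrec.nat_add.comp (Primrec.nat_mul.comp (Primrec.const 4)
    (Primrec.snd.comp Primrec.snd)) (Primrec.nat_mod.comp (Primrec.nat_div.comp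
      (Primrec.nat_mul.comp (Primrec.fst.comp Primrec.fst) ?_) (Primrec.snd.comp Primrec.fst))
      (Primrec.const 2))
  exact (pow_prim 2).comp (Primrec.succ.comp (Primrec.fst.comp Primrec.snd))

/-- The approximating sequence. -/
def T (a : ℕ → ℚ) (s : ℕ) : ℚ :=
  ((4 ^ s + 3 * HQ (a s).num.toNat (a s).den s : ℕ) : ℚ) / ((3 * 4 ^ s - 1 + 1 : ℕ) : ℚ)

theorem T_cast (a : ℕ → ℚ) (s : ℕ) : (T a s : ℝ) = 1 / 3 + (H (a s : ℝ) s : ℝ) / 4 ^ s := by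
  have : 3 * 4 ^ s - 1 + 1 = 3 * 4 ^ s := Nat.sub_add_cancel (by
    have : 0 < 4 ^ s := by positivity
    omega)
  rw [T, this, H_eq]
  push_cast
  field_simp

theorem T_comp (a : ℕ → ℚ) (ha : Computable a) : Computable (T a) := by
  have h4 : Computable (fun s : ℕ => 4 ^ s) := (pow_prim 4).to_comp
  have hmul : Computable₂ (fun a b : ℕ => a * b) := Primrec.nat_mul.to_comp
  have hadd : Computable₂ (fun a b : ℕ => a + b) := Primrec.nat_add.to_comp
  have hHQ : Computable₂ (fun (p : ℕ × ℕ) (n : ℕ) => HQ p.1 p.2 n) := HQ_prim.to_comp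
  have h5 : Computable (fun s : ℕ => HQ (a s).num.toNat (a s).den s) :=
    hHQ.comp ((num_comp.comp ha).pair (den_comp.comp ha)) Computable.id
  have h6 : Computable (fun s : ℕ => 4 ^ s + 3 * HQ (a s).num.toNat (a s).den s) :=
    hadd.comp h4 (hmul.comp (Computable.const 3) h5)
  have h7 : Computable (fun s : ℕ => 3 * 4 ^ s - 1) :=
    Computable.pred.comp (hmul.comp (Computable.const 3) h4)
  exact (frac_comp.comp (h6.pair h7)).of_eq fun s => rfl

/-- If `α ∈ [0,1)` is a left-c.e. real then `h₁ α` is a left-c.e. real. -/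
theorem stmt6 (α : ℝ) (h0 : 0 ≤ α) (h1 : α < 1) (h : LeftCE α) : LeftCE (h₁ α) := by
  by_cases hd : ∃ k : ℕ, (⌊α * 2 ^ k⌋₊ : ℝ) = α * 2 ^ k
  · obtain ⟨k, hk⟩ := hd
    refine ⟨fun _ => 1 / 3 + (H α k : ℚ) / 4 ^ k, Computable.const _, monotone_const, ?_⟩
    rw [h₁_of_dyadic α k hk]
    push_cast
    exact tendsto_const_nhds
  · push Not at hd
    obtain ⟨a, ha, hm, ht⟩ := h
    have hmR : Monotone (fun n => (a n : ℝ)) := fun i j hij => by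
      have := hm hij
      simpa using this
    have hle : ∀ s, (a s : ℝ) ≤ α := fun s => hmR.ge_of_tendsto ht s
    have hlim := H_tendsto α
    have hup : ∀ n, (H α n : ℝ) / 4 ^ n ≤ h₁ α - 1 / 3 := fun n =>
      (H_mono_n α).ge_of_tendsto hlim n
    refine ⟨T a, T_comp a ha, ?_, ?_⟩
    · intro i j hij
      have : (T a i : ℝ) ≤ T a j := by
        rw [T_cast, T_cast]
        have e1 := H_mono_n (a i : ℝ) hij
        have e2 : (H (a i : ℝ) j : ℝ) ≤ H (a j : ℝ) j := by
          exact_mod_cast H_mono _ _ (hmR hij) ((hle j).trans_lt h1) j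
        have e3 : (H (a i : ℝ) j : ℝ) / 4 ^ j ≤ (H (a j : ℝ) j : ℝ) / 4 ^ j := by gcongr
        simp only at e1
        linarith
      exact_mod_cast this
    · simp only [T_cast]
      have key : Tendsto (fun s => (H (a s : ℝ) s : ℝ) / 4 ^ s) atTop (𝓝 (h₁ α - 1 / 3)) := by
        refine tendsto_order.2 ⟨fun c hc => ?_, fun c hc => ?_⟩
        · obtain ⟨n, hn⟩ := ((tendsto_order.1 hlim).1 c hc).exists
          have hlt : (⌊α * 2 ^ n⌋₊ : ℝ) < α * 2 ^ n :=
            lt_of_le_of_ne (Nat.floor_le (by positivity)) (hd n)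
          have ht2 : Tendsto (fun s => (a s : ℝ) * 2 ^ n) atTop (𝓝 (α * 2 ^ n)) :=
            ht.mul_const _
          filter_upwards [(tendsto_order.1 ht2).1 _ hlt, eventually_ge_atTop n] with s hs hsn
          have e1 : ⌊(a s : ℝ) * 2 ^ n⌋₊ = ⌊α * 2 ^ n⌋₊ := by
            apply le_antisymm
            · apply Nat.floor_mono
              have := hle s
              gcongr
            · exact Nat.le_floor hs.le
          have e2 := (H_cmp (a s) α ((hle s).trans_lt h1) h1 n).2 e1
          have e3 := H_mono_n (a s : ℝ) hsn
          simp only [e2] at e3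
          linarith
        · refine Eventually.of_forall fun s => ?_
          have e2 : (H (a s : ℝ) s : ℝ) ≤ H α s := by
            exact_mod_cast H_mono _ _ (hle s) h1 s
          have e3 : (H (a s : ℝ) s : ℝ) / 4 ^ s ≤ (H α s : ℝ) / 4 ^ s := by gcongr
          have := hup s
          linarith
      have := key.const_add (1 / 3)
      simpa using this
end
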